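/- arXiv:2302.10773 — 2 statements merged into one kernel-verified Lean document; each statement's English description precedes it below -/
import Mathlib

section
/- Consider a tanh network of width W and weight bound R on ℝ^d, and assume additionally R·W ≥ 2. Then for every layer index ℓ ≥ 1, every component index i < W, all coordinates k, m < d, and every x ∈ ℝ^d, the second-order partial derivative satisfies |∂²_{x_k x_m} v^{(ℓ)}_i(x)| ≤ 2·R^{2ℓ}·W^{2ℓ−2}. -/
/-- The partial derivative of `f : ℝ^d → ℝ` in the `k`-th coordinate direction. -/
noncomputable def pd {d : ℕ} (f : (Fin d → ℝ) → ℝ) (k : Fin d) : (Fin d → ℝ) → ℝ :=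
  fun x => fderiv ℝ f x (Pi.single k 1)

lemma aux_pd_has {d : ℕ} {f : (Fin d → ℝ) → ℝ} {f' : (Fin d → ℝ) →L[ℝ] ℝ} {x : Fin d → ℝ}
    (h : HasFDerivAt f f' x) (k : Fin d) : pd f k x = f' (Pi.single k 1) := by
  unfold pd; rw [h.fderiv]

lemma aux_tanh_deriv (x : ℝ) : HasDerivAt Real.tanh (1 - Real.tanh x ^ 2) x := by
  have hc := (Real.cosh_pos x).ne'
  have h := (Real.hasDerivAt_sinh x).div (Real.hasDerivAt_cosh x) hc
  have e : Real.tanh = Real.sinh / Real.cosh := by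
    funext y; simp [Real.tanh_eq_sinh_div_cosh]
  have e' : 1 - Real.tanh x ^ 2 =
      (Real.cosh x * Real.cosh x - Real.sinh x * Real.sinh x) / Real.cosh x ^ 2 := by
    rw [Real.tanh_eq_sinh_div_cosh]
    field_simp
  rw [e', e]
  exact h

lemma aux_tanh_contDiff : ContDiff ℝ 2 Real.tanh := by
  have e : Real.tanh = fun y => Real.sinh y / Real.cosh y := by
    funext y; simp [Real.tanh_eq_sinh_div_cosh]
  rw [e]
  exact Real.contDiff_sinh.div Real.contDiff_cosh (fun x => (Real.cosh_pos x).ne')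

lemma aux_tanh_sq (x : ℝ) : Real.tanh x ^ 2 ≤ 1 := by
  rw [Real.tanh_eq_sinh_div_cosh, div_pow, div_le_one (pow_pos (Real.cosh_pos x) 2)]
  nlinarith [Real.cosh_sq x]

lemma aux_poly (t : ℝ) (h : t ^ 2 ≤ 1) : |2 * t * (1 - t ^ 2)| ≤ 1 := by
  have h' := abs_le.mp ((sq_le_one_iff_abs_le_one t).mp h)
  rw [abs_le]
  constructor
  · nlinarith [mul_nonneg (by linarith : (0:ℝ) ≤ 1 - t) (sq_nonneg (t + 1/2)), mul_nonneg (by linarith : (0:ℝ) ≤ 1 - t) (sq_nonneg (2*t + 1)), mul_nonneg (by linarith : (0:ℝ) ≤ 1 - t) (sq_nonneg (7*t + 4))]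
  · nlinarith [mul_nonneg (by linarith : (0:ℝ) ≤ 1 + t) (sq_nonneg (t - 1/2)), mul_nonneg (by linarith : (0:ℝ) ≤ 1 + t) (sq_nonneg (7*t - 4))]

/-- `f` is twice continuously differentiable with first/second partials bounded by `P`, `Q`. -/
def AuxBd {d : ℕ} (f : (Fin d → ℝ) → ℝ) (P Q : ℝ) : Prop :=
  ContDiff ℝ 2 f ∧ (∀ k x, |pd f k x| ≤ P) ∧ ∀ k m x, |pd (pd f k) m x| ≤ Q

lemma aux_pd_diff {d : ℕ} {f : (Fin d → ℝ) → ℝ} (h : ContDiff ℝ 2 f) (k : Fin d) :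
    Differentiable ℝ (pd f k) := by
  have h1 : ContDiff ℝ 1 (fderiv ℝ f) := h.fderiv_right (by norm_num)
  exact (h1.differentiable (by norm_num)).clm_apply (differentiable_const _)

lemma aux_tanh {d : ℕ} {g : (Fin d → ℝ) → ℝ} {P Q : ℝ} (h : AuxBd g P Q) :
    AuxBd (fun x => Real.tanh (g x)) P (P ^ 2 + Q) := by
  obtain ⟨hc, h1, h2⟩ := h
  have hgd : Differentiable ℝ g := hc.differentiable (by norm_num)
  have hF : ∀ x, HasFDerivAt (fun x => Real.tanh (g x))
      ((1 - Real.tanh (g x) ^ 2) • fderiv ℝ g x) x := fun x =>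
    (aux_tanh_deriv (g x)).comp_hasFDerivAt x (hgd x).hasFDerivAt
  have e1 : ∀ k, pd (fun x => Real.tanh (g x)) k
      = fun x => (1 - Real.tanh (g x) ^ 2) * pd g k x := by
    intro k; funext x; rw [aux_pd_has (hF x)]; simp [pd]
  have e2 : ∀ k m x, pd (pd (fun x => Real.tanh (g x)) k) m x =
      -(2 * Real.tanh (g x) * (1 - Real.tanh (g x) ^ 2)) * (pd g m x * pd g k x)
        + (1 - Real.tanh (g x) ^ 2) * pd (pd g k) m x := by
    intro k m x
    rw [e1]
    have hk := (aux_pd_diff hc k x).hasFDerivAt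
    have := (((hF x).pow 2).const_sub 1).fun_mul hk
    rw [aux_pd_has this]
    simp [pd]
    ring
  have ht : ∀ x, |1 - Real.tanh (g x) ^ 2| ≤ 1 := fun x => by
    rw [abs_le]; constructor <;> nlinarith [aux_tanh_sq (g x), sq_nonneg (Real.tanh (g x))]
  refine ⟨aux_tanh_contDiff.comp hc, ?_, ?_⟩
  · intro k x
    rw [e1, abs_mul]
    nlinarith [ht x, h1 k x, abs_nonneg (pd g k x)]
  · intro k m x
    rw [e2]
    refine (abs_add_le _ _).trans (add_le_add ?_ ?_)
    · rw [abs_mul, abs_neg, abs_mul (pd g m x)]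
      have a := aux_poly _ (aux_tanh_sq (g x))
      have hb : |pd g m x| * |pd g k x| ≤ P ^ 2 := by
        rw [sq]
        exact mul_le_mul (h1 m x) (h1 k x) (abs_nonneg _) ((abs_nonneg _).trans (h1 m x))
      exact (mul_le_of_le_one_left (by positivity) a).trans hb
    · rw [abs_mul]
      exact (mul_le_of_le_one_left (abs_nonneg _) (ht x)).trans (h2 k m x)

lemma aux_pd_lin {d W : ℕ} {u : Fin W → (Fin d → ℝ) → ℝ} (a : Fin W → ℝ) (c : ℝ)
    (hu : ∀ j, Differentiable ℝ (u j)) (k : Fin d) :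
    pd (fun x => ∑ j, a j * u j x + c) k = fun x => ∑ j, a j * pd (u j) k x + 0 := by
  funext x
  have : HasFDerivAt (fun x => ∑ j, a j * u j x + c) (∑ j, a j • fderiv ℝ (u j) x) x :=
    (HasFDerivAt.fun_sum (fun j _ => ((hu j x).hasFDerivAt.const_mul (a j)))).add_const c
  rw [aux_pd_has this]
  simp [pd]

lemma aux_sum_bd {W : ℕ} {a u : Fin W → ℝ} {R P : ℝ} (ha : ∀ j, |a j| ≤ R)
    (hR : 0 ≤ R) (hu : ∀ j, |u j| ≤ P) : |∑ j, a j * u j + 0| ≤ R * W * P := by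
  rw [add_zero]
  calc |∑ j, a j * u j| ≤ ∑ j, |a j * u j| := Finset.abs_sum_le_sum_abs _ _
    _ ≤ ∑ _j : Fin W, R * P := Finset.sum_le_sum fun j _ => by
        rw [abs_mul]; exact mul_le_mul (ha j) (hu j) (abs_nonneg _) hR
    _ = R * W * P := by simp; ring

lemma aux_lin {d W : ℕ} {u : Fin W → (Fin d → ℝ) → ℝ} {a : Fin W → ℝ} (c : ℝ) {R P Q : ℝ}
    (ha : ∀ j, |a j| ≤ R) (hR : 0 ≤ R) (hu : ∀ j, AuxBd (u j) P Q) :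
    AuxBd (fun x => ∑ j, a j * u j x + c) (R * W * P) (R * W * Q) := by
  have e := aux_pd_lin a c (fun j => (hu j).1.differentiable (by norm_num))
  refine ⟨?_, ?_, ?_⟩
  · exact (ContDiff.sum fun j _ => contDiff_const.mul (hu j).1).add contDiff_const
  · intro k x
    rw [e]
    exact aux_sum_bd ha hR fun j => (hu j).2.1 k x
  · intro k m x
    rw [e, aux_pd_lin a 0 (fun j => aux_pd_diff (hu j).1 k)]
    exact aux_sum_bd ha hR fun j => (hu j).2.2 k m x

lemma aux_base {d : ℕ} {a : Fin d → ℝ} (c : ℝ) {R : ℝ} (ha : ∀ j, |a j| ≤ R) :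
    AuxBd (fun x : Fin d → ℝ => ∑ j, a j * x j + c) R 0 := by
  have e : ∀ k, pd (fun x : Fin d → ℝ => ∑ j, a j * x j + c) k = fun _ => a k := by
    intro k
    rw [aux_pd_lin (u := fun j x => x j) a c (fun j => by fun_prop) k]
    funext x
    have : ∀ j, pd (fun x : Fin d → ℝ => x j) k x = (Pi.single k 1 : Fin d → ℝ) j := fun j =>
      aux_pd_has (hasFDerivAt_apply j x) k
    simp [this, Pi.single_apply]
  refine ⟨by fun_prop, ?_, ?_⟩
  · intro k x; rw [e]; exact ha k
  · intro k m x; rw [e]; simp [pd]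

theorem tanh_network_second_deriv_bound (d W : ℕ) (hW : 1 ≤ W) (R : ℝ) (hR : 0 ≤ R)
    (A1 : Fin W → Fin d → ℝ) (b1 : Fin W → ℝ)
    (A : ℕ → Fin W → Fin W → ℝ) (b : ℕ → Fin W → ℝ)
    (hA1 : ∀ i j, |A1 i j| ≤ R) (hA : ∀ ℓ i j, |A ℓ i j| ≤ R)
    (hRW : 2 ≤ R * (W : ℝ))
    (v : ℕ → (Fin d → ℝ) → Fin W → ℝ)
    (hv1 : ∀ (i : Fin W) (x : Fin d → ℝ),
      v 1 x i = Real.tanh (∑ j, A1 i j * x j + b1 i))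
    (hv : ∀ ℓ : ℕ, 2 ≤ ℓ → ∀ (i : Fin W) (x : Fin d → ℝ),
      v ℓ x i = Real.tanh (∑ j, A ℓ i j * v (ℓ - 1) x j + b ℓ i)) :
    ∀ ℓ : ℕ, 1 ≤ ℓ → ∀ (i : Fin W) (k m : Fin d) (x : Fin d → ℝ),
      |pd (pd (fun y => v ℓ y i) k) m x| ≤ 2 * R ^ (2 * ℓ) * (W : ℝ) ^ (2 * ℓ - 2) := by
  have key : ∀ n : ℕ, ∀ i : Fin W, AuxBd (fun y => v (n + 1) y i)
      (R * (R * W) ^ n) (2 * R ^ 2 * (R * W) ^ (2 * n)) := by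
    intro n
    induction n with
    | zero =>
      intro i
      have h := aux_tanh (aux_base (b1 i) (hA1 i))
      have e : (fun y => v (0 + 1) y i) = fun x => Real.tanh (∑ j, A1 i j * x j + b1 i) := by
        funext x; exact hv1 i x
      rw [e]
      refine ⟨h.1, fun k x => by simpa using h.2.1 k x, fun k m x => (h.2.2 k m x).trans ?_⟩
      simp
      nlinarith [sq_nonneg R]
    | succ n ih =>
      intro i
      have h := aux_tanh (aux_lin (b (n + 2) i) (hA (n + 2) i) hR ih)
      have e : (fun y => v (n + 1 + 1) y i) =
          fun x => Real.tanh (∑ j, A (n + 2) i j * v (n + 1) x j + b (n + 2) i) := by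
        funext x; exact hv (n + 2) (by omega) i x
      rw [e]
      refine ⟨h.1, fun k x => (h.2.1 k x).trans (le_of_eq (by ring)),
        fun k m x => (h.2.2 k m x).trans ?_⟩
      generalize R * (W : ℝ) = s at hRW
      have hp : 0 ≤ R ^ 2 * s ^ (2 * n) * s :=
        mul_nonneg (mul_nonneg (sq_nonneg R) (pow_nonneg (by linarith) _)) (by linarith)
      have e1 : (s * (R * s ^ n)) ^ 2 = (R ^ 2 * s ^ (2 * n) * s) * s := by ring
      have e2 : 2 * R ^ 2 * s ^ (2 * (n + 1)) = 2 * ((R ^ 2 * s ^ (2 * n) * s) * s) := by ring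
      have e3 : s * (2 * R ^ 2 * s ^ (2 * n)) = 2 * (R ^ 2 * s ^ (2 * n) * s) := by ring
      rw [e1, e2, e3]
      nlinarith
  intro l hl i k m x
  obtain ⟨n, rfl⟩ : ∃ n, l = n + 1 := ⟨l - 1, by omega⟩
  refine ((key n i).2.2 k m x).trans (le_of_eq ?_)
  have : 2 * (n + 1) - 2 = 2 * n := by omega
  rw [this]
  ring
end

section
/- Consider a tanh network of width W and weight bound R on ℝ^d, and assume additionally R·W ≥ 2. Then for every layer index ℓ ≥ 1, every component index i < W, all coordinates k, m, s < d, and every x ∈ ℝ^d, the third-order partial derivative satisfies |∂³_{x_k x_m x_s} v^{(ℓ)}_i(x)| ≤ 10·R^{3ℓ}·W^{3ℓ−3}. -/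
theorem pd_has {d : ℕ} {f : (Fin d → ℝ) → ℝ} (k : Fin d) (x : Fin d → ℝ)
    {f' : (Fin d → ℝ) →L[ℝ] ℝ} (h : HasFDerivAt f f' x) : pd f k x = f' (Pi.single k 1) := by
  simp [pd, h.fderiv]

theorem pd_smooth {d : ℕ} {f : (Fin d → ℝ) → ℝ} (k : Fin d)
    (h : ContDiff ℝ (⊤ : ℕ∞) f) : ContDiff ℝ (⊤ : ℕ∞) (pd f k) := by
  unfold pd
  exact (h.fderiv_right (m := (⊤ : ℕ∞)) (by simp)).clm_apply contDiff_const

theorem smooth_has {d : ℕ} {f : (Fin d → ℝ) → ℝ}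
    (h : ContDiff ℝ (⊤ : ℕ∞) f) (x : Fin d → ℝ) : HasFDerivAt f (fderiv ℝ f x) x :=
  (h.differentiable (by simp) x).hasFDerivAt

theorem pd_mul' {d : ℕ} {f g : (Fin d → ℝ) → ℝ} (k : Fin d)
    (hf : ContDiff ℝ (⊤ : ℕ∞) f) (hg : ContDiff ℝ (⊤ : ℕ∞) g) (x : Fin d → ℝ) :
    pd (fun y => f y * g y) k x = f x * pd g k x + pd f k x * g x := by
  refine (pd_has k x ((smooth_has hf x).mul (smooth_has hg x))).trans ?_
  simp [pd, mul_comm]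

theorem pd_sub' {d : ℕ} {f g : (Fin d → ℝ) → ℝ} (k : Fin d)
    (hf : ContDiff ℝ (⊤ : ℕ∞) f) (hg : ContDiff ℝ (⊤ : ℕ∞) g) (x : Fin d → ℝ) :
    pd (fun y => f y - g y) k x = pd f k x - pd g k x := by
  refine (pd_has k x ((smooth_has hf x).sub (smooth_has hg x))).trans ?_
  simp [pd]

theorem pd_const' {d : ℕ} (c : ℝ) (k : Fin d) (x : Fin d → ℝ) :
    pd (fun _ => c) k x = 0 := by
  rw [pd_has k x (hasFDerivAt_const c x)]; simp

theorem pd_aff {d W : ℕ} (a : Fin W → ℝ) (c : ℝ) (w : Fin W → (Fin d → ℝ) → ℝ)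
    (hw : ∀ j, ContDiff ℝ (⊤ : ℕ∞) (w j)) (k : Fin d) :
    pd (fun y => ∑ j, a j * w j y + c) k = fun y => ∑ j, a j * pd (w j) k y + 0 := by
  funext x
  rw [pd_has k x ((HasFDerivAt.fun_sum (u := Finset.univ) (fun j _ =>
    (smooth_has (hw j) x).const_mul (a j))).add_const c)]
  simp [pd]

theorem tanh_hasDeriv (t : ℝ) : HasDerivAt Real.tanh (1 - Real.tanh t ^ 2) t := by
  have h := (Real.hasDerivAt_sinh t).div (Real.hasDerivAt_cosh t) (Real.cosh_pos t).ne'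
  have e : Real.tanh = Real.sinh / Real.cosh := by
    funext y; simp [Real.tanh_eq_sinh_div_cosh]
  rw [← e] at h
  have e2 : 1 - Real.tanh t ^ 2 =
      (Real.cosh t * Real.cosh t - Real.sinh t * Real.sinh t) / Real.cosh t ^ 2 := by
    have := (Real.cosh_pos t).ne'
    rw [Real.tanh_eq_sinh_div_cosh]
    field_simp
  rw [e2]
  exact h

theorem tanh_smooth : ContDiff ℝ (⊤ : ℕ∞) Real.tanh := by
  have e : Real.tanh = fun y => Real.sinh y / Real.cosh y := by
    funext y; simp [Real.tanh_eq_sinh_div_cosh]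
  rw [e]
  exact Real.contDiff_sinh.div Real.contDiff_cosh (fun x => (Real.cosh_pos x).ne')

theorem pd_tanh {d : ℕ} {u : (Fin d → ℝ) → ℝ} (hu : ContDiff ℝ (⊤ : ℕ∞) u) (k : Fin d)
    (x : Fin d → ℝ) :
    pd (fun y => Real.tanh (u y)) k x = (1 - Real.tanh (u x) ^ 2) * pd u k x := by
  refine (pd_has k x ((tanh_hasDeriv (u x)).comp_hasFDerivAt x (smooth_has hu x))).trans ?_
  simp [pd]

theorem pd_tanh2 {d : ℕ} {u : (Fin d → ℝ) → ℝ} (hu : ContDiff ℝ (⊤ : ℕ∞) u) (k m : Fin d)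
    (x : Fin d → ℝ) :
    pd (pd (fun y => Real.tanh (u y)) k) m x = (1 - Real.tanh (u x) ^ 2) * pd (pd u k) m x
      - 2 * Real.tanh (u x) * (1 - Real.tanh (u x) ^ 2) * (pd u k x * pd u m x) := by
  have hf : ContDiff ℝ (⊤ : ℕ∞) (fun y => Real.tanh (u y)) := tanh_smooth.comp hu
  have e : pd (fun y => Real.tanh (u y)) k =
      fun y => pd u k y - Real.tanh (u y) * (Real.tanh (u y) * pd u k y) := by
    funext y; rw [pd_tanh hu]; ring
  have hk := pd_smooth k hu
  rw [e, pd_sub' m hk (hf.mul (hf.mul hk)), pd_mul' m hf (hf.mul hk), pd_mul' m hf hk,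
    pd_tanh hu]
  ring

theorem pd_tanh3 {d : ℕ} {u : (Fin d → ℝ) → ℝ} (hu : ContDiff ℝ (⊤ : ℕ∞) u) (k m s : Fin d)
    (x : Fin d → ℝ) :
    pd (pd (pd (fun y => Real.tanh (u y)) k) m) s x =
      (1 - Real.tanh (u x) ^ 2) * pd (pd (pd u k) m) s x
      - 2 * Real.tanh (u x) * (1 - Real.tanh (u x) ^ 2) *
        (pd (pd u k) m x * pd u s x + pd (pd u k) s x * pd u m x + pd u k x * pd (pd u m) s x)
      + (6 * Real.tanh (u x) ^ 2 - 2) * (1 - Real.tanh (u x) ^ 2) *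
        (pd u k x * pd u m x * pd u s x) := by
  have hf : ContDiff ℝ (⊤ : ℕ∞) (fun y => Real.tanh (u y)) := tanh_smooth.comp hu
  have hk := pd_smooth k hu
  have hm := pd_smooth m hu
  have hkm := pd_smooth m hk
  have hF : ContDiff ℝ (⊤ : ℕ∞) (fun y => 1 - Real.tanh (u y) * Real.tanh (u y)) :=
    contDiff_const.sub (hf.mul hf)
  have h2 : ContDiff ℝ (⊤ : ℕ∞) (fun y => pd (pd u k) m y
       - 2 * (Real.tanh (u y) * (pd u k y * pd u m y))) :=
    hkm.sub (contDiff_const.mul (hf.mul (hk.mul hm)))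
  have e : pd (pd (fun y => Real.tanh (u y)) k) m =
      fun y => (1 - Real.tanh (u y) * Real.tanh (u y)) * (pd (pd u k) m y
       - 2 * (Real.tanh (u y) * (pd u k y * pd u m y))) := by
    funext y; rw [pd_tanh2 hu]; ring
  rw [e, pd_mul' s hF h2, pd_sub' s hkm (contDiff_const.mul (hf.mul (hk.mul hm))),
    pd_mul' s contDiff_const (hf.mul (hk.mul hm)), pd_mul' s hf (hk.mul hm), pd_mul' s hk hm,
    pd_sub' s contDiff_const (hf.mul hf), pd_mul' s hf hf, pd_const', pd_const', pd_tanh hu]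
  ring

theorem tanh_sq_le (t : ℝ) : Real.tanh t ^ 2 ≤ 1 := by
  rw [Real.tanh_eq_sinh_div_cosh, div_pow, div_le_one (by have := Real.cosh_pos t; positivity)]
  have := Real.cosh_sq t
  linarith

theorem abs_mul_le' {a b A B : ℝ} (ha : |a| ≤ A) (hb : |b| ≤ B) : |a * b| ≤ A * B := by
  rw [abs_mul]
  exact mul_le_mul ha hb (abs_nonneg _) ((abs_nonneg _).trans ha)

theorem coef1 {t : ℝ} (h : t ^ 2 ≤ 1) : |1 - t ^ 2| ≤ 1 := by
  rw [abs_le]; constructor <;> nlinarith [sq_nonneg t]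

theorem coef2 {t : ℝ} (h : t ^ 2 ≤ 1) : |2 * t * (1 - t ^ 2)| ≤ 1 := by
  apply abs_le_of_sq_le_sq _ (by norm_num)
  have h0 := sq_nonneg t
  have e : (2 * t * (1 - t ^ 2)) ^ 2 = 4 * t ^ 2 * (1 - t ^ 2) ^ 2 := by ring
  rw [e]
  generalize t ^ 2 = q at *
  nlinarith [mul_nonneg h0 (sub_nonneg.2 h), sq_nonneg (2 * q - 1)]

theorem coef3 {t : ℝ} (h : t ^ 2 ≤ 1) : |(6 * t ^ 2 - 2) * (1 - t ^ 2)| ≤ 2 := by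
  have h0 := sq_nonneg t
  generalize t ^ 2 = q at *
  rw [abs_le]; constructor <;> nlinarith [mul_nonneg h0 (sub_nonneg.2 h), sq_nonneg (3 * q - 2)]

/-- Bounds on derivatives up to order three. -/
def Bd {d : ℕ} (f : (Fin d → ℝ) → ℝ) (c1 c2 c3 : ℝ) : Prop :=
  ContDiff ℝ (⊤ : ℕ∞) f ∧ (∀ k x, |pd f k x| ≤ c1) ∧ (∀ k m x, |pd (pd f k) m x| ≤ c2) ∧
    (∀ k m s x, |pd (pd (pd f k) m) s x| ≤ c3)

theorem Bd_tanh {d : ℕ} {u : (Fin d → ℝ) → ℝ} {D : ℝ} (hD : 0 ≤ D)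
    (h : Bd u D (D ^ 2) (5 / 2 * D ^ 3)) :
    Bd (fun y => Real.tanh (u y)) D (2 * D ^ 2) (10 * D ^ 3) := by
  obtain ⟨hu, h1, h2, h3⟩ := h
  refine ⟨tanh_smooth.comp hu, ?_, ?_, ?_⟩
  · intro k x
    rw [pd_tanh hu]
    simpa using abs_mul_le' (coef1 (tanh_sq_le (u x))) (h1 k x)
  · intro k m x
    rw [pd_tanh2 hu]
    have a := abs_mul_le' (coef1 (tanh_sq_le (u x))) (h2 k m x)
    have b := abs_mul_le' (coef2 (tanh_sq_le (u x))) (abs_mul_le' (h1 k x) (h1 m x))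
    refine (abs_sub _ _).trans ?_
    linarith
  · intro k m s x
    rw [pd_tanh3 hu]
    have a := abs_mul_le' (coef1 (tanh_sq_le (u x))) (h3 k m s x)
    have i1 := abs_mul_le' (h2 k m x) (h1 s x)
    have i2 := abs_mul_le' (h2 k s x) (h1 m x)
    have i3 := abs_mul_le' (h1 k x) (h2 m s x)
    have i := (abs_add_three _ _ _).trans (add_le_add (add_le_add i1 i2) i3)
    have b := abs_mul_le' (coef2 (tanh_sq_le (u x))) i
    have c := abs_mul_le' (coef3 (tanh_sq_le (u x)))
      (abs_mul_le' (abs_mul_le' (h1 k x) (h1 m x)) (h1 s x))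
    refine (abs_add_le _ _).trans ?_
    refine (add_le_add ((abs_sub _ _).trans (add_le_add a b)) c).trans ?_
    have : 0 ≤ D ^ 3 := by positivity
    linarith

theorem sum_bd {W : ℕ} {R C : ℝ} (a w : Fin W → ℝ) (ha : ∀ j, |a j| ≤ R) (hw : ∀ j, |w j| ≤ C) :
    |∑ j, a j * w j + 0| ≤ R * W * C := by
  rw [add_zero]
  refine (Finset.abs_sum_le_sum_abs _ _).trans ?_
  refine (Finset.sum_le_sum (fun j _ => abs_mul_le' (ha j) (hw j))).trans ?_
  simp; linarith

theorem Bd_aff {d W : ℕ} {R c1 c2 c3 : ℝ} (a : Fin W → ℝ) (c : ℝ) (w : Fin W → (Fin d → ℝ) → ℝ)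
    (ha : ∀ j, |a j| ≤ R) (hw : ∀ j, Bd (w j) c1 c2 c3) :
    Bd (fun y => ∑ j, a j * w j y + c) (R * W * c1) (R * W * c2) (R * W * c3) := by
  refine ⟨?_, ?_, ?_, ?_⟩
  · exact (ContDiff.sum fun j _ => contDiff_const.mul (hw j).1).add contDiff_const
  · intro k x
    rw [pd_aff a c w (fun j => (hw j).1)]
    exact sum_bd _ _ ha (fun j => (hw j).2.1 k x)
  · intro k m x
    rw [pd_aff a c w (fun j => (hw j).1), pd_aff a 0 _ (fun j => pd_smooth k (hw j).1)]
    exact sum_bd _ _ ha (fun j => (hw j).2.2.1 k m x)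
  · intro k m s x
    rw [pd_aff a c w (fun j => (hw j).1), pd_aff a 0 _ (fun j => pd_smooth k (hw j).1),
      pd_aff a 0 _ (fun j => pd_smooth m (pd_smooth k (hw j).1))]
    exact sum_bd _ _ ha (fun j => (hw j).2.2.2 k m s x)

theorem pd_coord {d : ℕ} (a : Fin d → ℝ) (c : ℝ) (k : Fin d) :
    pd (fun y => ∑ j, a j * y j + c) k = fun _ => a k := by
  rw [pd_aff a c (fun j y => y j) (fun j => contDiff_apply ℝ ℝ j)]
  funext x
  have : ∀ j, pd (fun y : Fin d → ℝ => y j) k x = (Pi.single k 1 : Fin d → ℝ) j := by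
    intro j
    rw [pd_has k x (hasFDerivAt_apply j x)]
    simp
  simp [this, Pi.single_apply]

theorem Bd_coord {d : ℕ} {R : ℝ} (hR : 0 ≤ R) (a : Fin d → ℝ) (c : ℝ) (ha : ∀ j, |a j| ≤ R) :
    Bd (fun y => ∑ j, a j * y j + c) R (R ^ 2) (5 / 2 * R ^ 3) := by
  have z : ∀ (c : ℝ) (k : Fin d), pd (fun _ => c) k = fun _ => 0 := fun c k => by
    funext x; exact pd_const' c k x
  refine ⟨?_, ?_, ?_, ?_⟩
  · exact (ContDiff.sum fun j _ => contDiff_const.mul (contDiff_apply ℝ ℝ j)).add contDiff_const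
  · intro k x
    rw [pd_coord]; exact ha k
  · intro k m x
    rw [pd_coord, z]; simp; positivity
  · intro k m s x
    rw [pd_coord, z, z]; simp; positivity

theorem Bd.mono' {d : ℕ} {f : (Fin d → ℝ) → ℝ} {a b c a' b' c' : ℝ} (h : Bd f a b c)
    (h1 : a ≤ a') (h2 : b ≤ b') (h3 : c ≤ c') : Bd f a' b' c' :=
  ⟨h.1, fun k x => (h.2.1 k x).trans h1, fun k m x => (h.2.2.1 k m x).trans h2,
    fun k m s x => (h.2.2.2 k m s x).trans h3⟩

theorem tanh_network_third_deriv_bound (d W : ℕ) (hW : 1 ≤ W) (R : ℝ) (hR : 0 ≤ R)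
    (A1 : Fin W → Fin d → ℝ) (b1 : Fin W → ℝ)
    (A : ℕ → Fin W → Fin W → ℝ) (b : ℕ → Fin W → ℝ)
    (hA1 : ∀ i j, |A1 i j| ≤ R) (hA : ∀ ℓ i j, |A ℓ i j| ≤ R)
    (hRW : 2 ≤ R * (W : ℝ))
    (v : ℕ → (Fin d → ℝ) → Fin W → ℝ)
    (hv1 : ∀ (i : Fin W) (x : Fin d → ℝ),
      v 1 x i = Real.tanh (∑ j, A1 i j * x j + b1 i))
    (hv : ∀ ℓ : ℕ, 2 ≤ ℓ → ∀ (i : Fin W) (x : Fin d → ℝ),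
      v ℓ x i = Real.tanh (∑ j, A ℓ i j * v (ℓ - 1) x j + b ℓ i)) :
    ∀ ℓ : ℕ, 1 ≤ ℓ → ∀ (i : Fin W) (k m s : Fin d) (x : Fin d → ℝ),
      |pd (pd (pd (fun y => v ℓ y i) k) m) s x| ≤ 10 * R ^ (3 * ℓ) * (W : ℝ) ^ (3 * ℓ - 3) := by
  have key : ∀ n : ℕ, ∀ i, Bd (fun y => v (n + 1) y i) (R * (R * W) ^ n)
      (2 * (R * (R * W) ^ n) ^ 2) (10 * (R * (R * W) ^ n) ^ 3) := by
    intro n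
    induction n with
    | zero =>
      intro i
      simp only [zero_add, hv1, pow_zero, mul_one]
      exact Bd_tanh hR (Bd_coord hR (A1 i) (b1 i) (hA1 i))
    | succ n ih =>
      intro i
      have e : (fun y => v (n + 1 + 1) y i) = fun y =>
          Real.tanh (∑ j, A (n + 1 + 1) i j * v (n + 1) y j + b (n + 1 + 1) i) := by
        funext y; exact hv (n + 1 + 1) (by omega) i y
      rw [e]
      have hD : 0 ≤ R * (R * W : ℝ) ^ n := by positivity
      have e2 : R * (R * W : ℝ) ^ (n + 1) = (R * W) * (R * (R * W : ℝ) ^ n) := by ring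
      rw [e2]
      refine Bd_tanh (by positivity)
        ((Bd_aff (A (n + 1 + 1) i) (b (n + 1 + 1) i) (fun j y => v (n + 1) y j)
          (hA _ i) ih).mono' le_rfl ?_ ?_)
      · generalize R * (R * W : ℝ) ^ n = D at *
        generalize R * (W : ℝ) = M at *
        have : 0 ≤ M * D ^ 2 * (M - 2) :=
          mul_nonneg (mul_nonneg (by linarith) (by positivity)) (by linarith)
        nlinarith
      · generalize R * (R * W : ℝ) ^ n = D at *
        generalize R * (W : ℝ) = M at *
        have : 0 ≤ M * D ^ 3 * (M ^ 2 - 4) :=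
          mul_nonneg (mul_nonneg (by linarith) (by positivity)) (by nlinarith)
        nlinarith
  intro ℓ hl i k m s x
  obtain ⟨n, rfl⟩ : ∃ n, ℓ = n + 1 := ⟨ℓ - 1, by omega⟩
  refine ((key n i).2.2.2 k m s x).trans (le_of_eq ?_)
  have : 3 * (n + 1) - 3 = 3 * n := by omega
  rw [this]
  ring
end
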